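/- (Proximity theorem) Let f : ℤⁿ → ℝ ∪ {+∞} be a DDM-convex function, α a positive integer, and x^α ∈ dom f. If f(x^α) ≤ f(x^α + αd) for all d ∈ {−1, 0, +1}ⁿ, then there exists a global minimizer x* of f (i.e., f(x*) ≤ f(z) for all z ∈ ℤⁿ) with ‖x^α − x*‖_∞ ≤ n(α − 1). -/

import Mathlib

open Finset

/-- Directed midpoint `μ(x,y)`: round `(xᵢ+yᵢ)/2` towards `xᵢ`, componentwise:
`μ(x,y)ᵢ = ⌈(xᵢ+yᵢ)/2⌉` if `xᵢ ≥ yᵢ`, and `μ(x,y)ᵢ = ⌊(xᵢ+yᵢ)/2⌋` if `xᵢ < yᵢ`. -/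
def dmu {n : ℕ} (x y : Fin n → ℤ) : Fin n → ℤ := fun i =>
  if y i ≤ x i then ⌈((x i + y i : ℤ) : ℚ) / 2⌉ else ⌊((x i + y i : ℤ) : ℚ) / 2⌋

/-- The ℓ∞-norm of an integer vector, as a natural number. -/
def normInf {n : ℕ} (z : Fin n → ℤ) : ℕ := Finset.univ.sup fun i => (z i).natAbs

/-- A function `f : ℤⁿ → ℝ ∪ {+∞}` is DDM-convex if
`f(x) + f(y) ≥ f(μ(x,y)) + f(μ(y,x))` for all `x, y ∈ ℤⁿ`. -/
def DDMConvexFn {n : ℕ} (f : (Fin n → ℤ) → EReal) : Prop :=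
  ∀ x y : Fin n → ℤ, f (dmu x y) + f (dmu y x) ≤ f x + f y

/-!
Cut a displacement `z` into the layers `eₖ`, `k < ‖z‖_∞`, where `eₖ` is the sign vector of `z`
restricted to the coordinates with `|zᵢ| > k`. The directed midpoints of `x + ∑_{k ∈ J} eₖ` and
`x + ∑_{k ∈ K} eₖ`, for `J ⊆ K`, are obtained by sharing out the elements of `K \ J` alternately,
so they are again of this form. A DDM-convex function therefore satisfies the supermodular
inequality `h A + h B ≤ h (A ∩ B) + h (A ∪ B)`, where `h S = f (x + ∑_{k ∈ S} eₖ)`, for one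
nontrivial pair `A`, `B` with given intersection and union, and in a distributive lattice this
forces it for all pairs.

The supports of the layers form a chain of nonempty subsets of an `n`-element set. If
`‖z‖_∞ > n(α - 1)`, then some `α` layers coincide, with a common value `d ∈ {-1, 0, 1}ⁿ`, and
`f (x + αd) + f (x + z - αd) ≤ f x + f (x + z)`. If `x` is optimal on the scale `α`, this gives
`f (x + z - αd) ≤ f (x + z)`, and `x + z - αd` is closer to `x`. So every value of `f` is matched or
improved on in the finite box `‖z‖_∞ ≤ n(α - 1)`.
-/

section Supermodular

theorem add_le_add_of_pivot {M : Type*} [AddCommMonoid M] [Preorder M] [AddLeftMono M]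
    {r : M} (hr : AddLECancellable r) {a b a₁ a₂ b₁ b₂ u v : M} (ha : a + r ≤ a₁ + a₂)
    (hb : b + r ≤ b₁ + b₂) (h₁ : a₁ + b₁ ≤ u + r) (h₂ : a₂ + b₂ ≤ r + v) : a + b ≤ u + v := by
  rw [← hr.add_le_add_iff_right, ← hr.add_le_add_iff_right]
  calc a + b + r + r
      = (a + r) + (b + r) := by ac_rfl
    _ ≤ (a₁ + a₂) + (b₁ + b₂) := add_le_add ha hb
    _ = (a₁ + b₁) + (a₂ + b₂) := add_add_add_comm ..
    _ ≤ (u + r) + (r + v) := add_le_add h₁ h₂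
    _ = u + v + r + r := by ac_rfl

theorem card_Icc_lt_card_Icc {P : Type*} [PartialOrder P] [LocallyFiniteOrder P] {a b c d : P}
    (hab : a ≤ b) (hac : a ≤ c) (hdb : d ≤ b) (hne : c = a → d ≠ b) :
    #(Icc c d) < #(Icc a b) := by
  refine card_lt_card ⟨Icc_subset_Icc hac hdb, fun hsub => ?_⟩
  have hca : c ≤ a := (mem_Icc.1 (hsub (left_mem_Icc.2 hab))).1
  have hbd : b ≤ d := (mem_Icc.1 (hsub (right_mem_Icc.2 hab))).2
  exact hne (hca.antisymm hac) (hdb.antisymm hbd)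

variable {L : Type*} [DistribLattice L] {h : L → EReal}

/-- The inequalities for `(a, e)`, `(b, e)`, `(a ⊓ e, b ⊓ e)` and `(a ⊔ e, b ⊔ e)` add up to the one
for `(a, b)`, with `h e` occurring twice on either side. -/
theorem supermodular_of_pivot {a b e : L} (he_bot : h e ≠ ⊥) (he_top : h e ≠ ⊤)
    (inf_lt : a ⊓ b < e) (lt_sup : e < a ⊔ b) (hea : e ≠ a) (heb : e ≠ b)
    (smaller : ∀ c d, a ⊓ b ≤ c ⊓ d → c ⊔ d ≤ a ⊔ b → (c ⊓ d = a ⊓ b → c ⊔ d ≠ a ⊔ b) →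
      h c + h d ≤ h (c ⊓ d) + h (c ⊔ d)) :
    h a + h b ≤ h (a ⊓ b) + h (a ⊔ b) := by
  have hae := smaller a e (le_inf inf_le_left inf_lt.le) (sup_le le_sup_left lt_sup.le)
    fun hinf hsup => heb (eq_of_inf_eq_sup_eq (a := a) (by rwa [inf_comm, inf_comm b])
      (by rwa [sup_comm, sup_comm b]))
  have hbe := smaller b e (le_inf inf_le_right inf_lt.le) (sup_le le_sup_right lt_sup.le)
    fun hinf hsup => hea (eq_of_inf_eq_sup_eq (a := b) (by rwa [inf_comm]) (by rwa [sup_comm]))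
  have inf_inf : (a ⊓ e) ⊓ (b ⊓ e) = a ⊓ b := by
    rw [← inf_inf_distrib_right, inf_eq_left.2 inf_lt.le]
  have inf_sup : (a ⊓ e) ⊔ (b ⊓ e) = e := by rw [← inf_sup_right, inf_eq_right.2 lt_sup.le]
  have sup_inf : (a ⊔ e) ⊓ (b ⊔ e) = e := by rw [← sup_inf_right, sup_eq_right.2 inf_lt.le]
  have sup_sup : (a ⊔ e) ⊔ (b ⊔ e) = a ⊔ b := by
    rw [← sup_sup_distrib_right, sup_eq_left.2 lt_sup.le]
  have hlower := smaller (a ⊓ e) (b ⊓ e) inf_inf.ge (inf_sup.trans_le lt_sup.le)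
    fun _ => inf_sup.trans_ne lt_sup.ne
  have hupper := smaller (a ⊔ e) (b ⊔ e) (inf_lt.le.trans sup_inf.ge) sup_sup.le
    fun hinf => absurd (sup_inf.symm.trans hinf) inf_lt.ne'
  rw [inf_inf, inf_sup] at hlower
  rw [sup_inf, sup_sup] at hupper
  lift h e to ℝ using ⟨he_top, he_bot⟩ with r
  exact add_le_add_of_pivot (EReal.addLECancellable_coe r) hae hbe hlower hupper

theorem supermodular_of_exists_incompRel [LocallyFiniteOrder L] (hbot : ∀ a, h a ≠ ⊥)
    (hsplit : ∀ a b, IncompRel (· ≤ ·) a b → ∃ e f, IncompRel (· ≤ ·) e f ∧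
      e ⊓ f = a ⊓ b ∧ e ⊔ f = a ⊔ b ∧ h e + h f ≤ h (a ⊓ b) + h (a ⊔ b)) (a b : L) :
    h a + h b ≤ h (a ⊓ b) + h (a ⊔ b) := by
  induction hm : #(Icc (a ⊓ b) (a ⊔ b)) using Nat.strong_induction_on generalizing a b with
  | _ m ih
  subst hm
  by_cases hab : a ≤ b
  · rw [inf_eq_left.2 hab, sup_eq_right.2 hab]
  by_cases hba : b ≤ a
  · rw [inf_eq_right.2 hba, sup_eq_left.2 hba, add_comm]
  obtain ⟨e, f, ⟨hef, hfe⟩, hinf, hsup, hmid⟩ := hsplit a b ⟨hab, hba⟩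
  rcases eq_or_ne e a with rfl | hea
  · have hfb : f = b := eq_of_inf_eq_sup_eq (a := e) (by simpa only [inf_comm] using hinf)
      (by simpa only [sup_comm] using hsup)
    rwa [hfb] at hmid
  rcases eq_or_ne e b with rfl | heb
  · have hfa : f = a := eq_of_inf_eq_sup_eq (a := e) (by rwa [inf_comm]) (by rwa [sup_comm])
    rwa [hfa, add_comm] at hmid
  by_cases htop : h (a ⊓ b) + h (a ⊔ b) = ⊤
  · exact htop ▸ le_top
  have he : h e ≠ ⊤ :=
    ((EReal.add_ne_top_iff_ne_top₂ (hbot e) (hbot f)).1 (ne_top_of_le_ne_top htop hmid)).1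
  refine supermodular_of_pivot (hbot e) he (hinf ▸ inf_lt_left.2 hef) (hsup ▸ left_lt_sup.2 hfe)
    hea heb fun c d hc hd hne => ?_
  exact ih _ (card_Icc_lt_card_Icc inf_le_sup hc hd hne) c d rfl

end Supermodular

section DirectedMidpoint

variable {n : ℕ}

theorem dmu_apply (x y : Fin n → ℤ) (i : Fin n) : dmu x y i = x i + (y i - x i).tdiv 2 := by
  have hceil (m : ℤ) : ⌈(m : ℚ) / 2⌉ = -(-m / 2) := Rat.ceil_intCast_div_natCast m 2
  have hfloor (m : ℤ) : ⌊(m : ℚ) / 2⌋ = m / 2 := Rat.floor_intCast_div_natCast m 2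
  simp only [dmu, hceil, hfloor]
  split_ifs with hyx
  · rw [← neg_sub, Int.neg_tdiv, Int.tdiv_eq_ediv_of_nonneg (by lia)]
    lia
  · rw [Int.tdiv_eq_ediv_of_nonneg (by lia)]
    lia

theorem dmu_add_dmu (x y : Fin n → ℤ) : dmu x y + dmu y x = x + y := by
  ext i
  rw [Pi.add_apply, Pi.add_apply, dmu_apply, dmu_apply, ← neg_sub (y i) (x i), Int.neg_tdiv]
  ring

end DirectedMidpoint

section Halve

/-- Every second element of `D`, in increasing order and starting with the second one. -/
def halve (D : Finset ℕ) : Finset ℕ := {k ∈ D | Odd (Nat.count (· ∈ D) k)}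

theorem halve_subset (D : Finset ℕ) : halve D ⊆ D := filter_subset _ _

theorem count_mem_halve (D : Finset ℕ) (t : ℕ) :
    Nat.count (· ∈ halve D) t = Nat.count (· ∈ D) t / 2 := by
  induction t with
  | zero => simp
  | succ t ih =>
    have hmem : t ∈ halve D ↔ t ∈ D ∧ Nat.count (· ∈ D) t % 2 = 1 := by
      rw [halve, mem_filter, Nat.odd_iff]
    rw [Nat.count_succ, Nat.count_succ, ih]
    split_ifs <;> lia

theorem card_halve (D : Finset ℕ) : #(halve D) = #D / 2 := by
  obtain ⟨t, ht⟩ := D.exists_nat_subset_range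
  have hcount {S : Finset ℕ} (hS : S ⊆ range t) : Nat.count (· ∈ S) t = #S := by
    rw [Nat.count_eq_card_filter_range, filter_mem_eq_inter, inter_eq_right.2 hS]
  rw [← hcount ht, ← count_mem_halve, hcount ((halve_subset D).trans ht)]

theorem incompRel_union_halve {J K : Finset ℕ} (hcard : 1 < #(K \ J)) :
    IncompRel (· ≤ ·) (J ∪ halve (K \ J)) (K \ halve (K \ J)) := by
  obtain ⟨p, hp⟩ : (halve (K \ J)).Nonempty := card_pos.1 (by rw [card_halve]; lia)
  obtain ⟨q, hq, hq'⟩ : ∃ q ∈ K \ J, q ∉ halve (K \ J) :=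
    exists_mem_notMem_of_card_lt_card (by rw [card_halve]; lia)
  exact ⟨fun hle => (mem_sdiff.1 (hle (mem_union_right _ hp))).2 hp, fun hle => by
    have hqJ := hle (mem_sdiff.2 ⟨sdiff_subset hq, hq'⟩)
    grind⟩

theorem one_lt_card_union_sdiff_inter {A B : Finset ℕ} (hAB : IncompRel (· ≤ ·) A B) :
    1 < #((A ∪ B) \ (A ∩ B)) := by
  obtain ⟨a, haA, haB⟩ := not_subset.1 hAB.1
  obtain ⟨b, hbB, hbA⟩ := not_subset.1 hAB.2
  exact one_lt_card.2 ⟨a, by grind, b, by grind, by grind⟩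

end Halve

section NormInf

variable {n : ℕ}

theorem natAbs_le_normInf (z : Fin n → ℤ) (i : Fin n) : (z i).natAbs ≤ normInf z :=
  le_sup (f := fun i => (z i).natAbs) (mem_univ i)

theorem normInf_neg (z : Fin n → ℤ) : normInf (-z) = normInf z := by
  simp only [normInf, Pi.neg_apply, Int.natAbs_neg]

theorem finite_setOf_normInf_le (R : ℕ) : {z : Fin n → ℤ | normInf z ≤ R}.Finite := by
  refine (Set.finite_Icc (fun _ => -(R : ℤ)) (fun _ => (R : ℤ))).subset fun z hz => ?_
  have hzi (i : Fin n) : (z i).natAbs ≤ R := (natAbs_le_normInf z i).trans hz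
  exact ⟨fun i => by grind, fun i => by grind⟩

end NormInf

section Layer

variable {n : ℕ}

/-- The `k`-th layer of `z`: the sign vector of `z` restricted to the coordinates of absolute
value larger than `k`. Layers are numbered from `0`, and those with `k < normInf z` sum to `z`. -/
def layer (z : Fin n → ℤ) (k : ℕ) : Fin n → ℤ :=
  fun i => if k < (z i).natAbs then (z i).sign else 0

theorem layer_apply_mem (z : Fin n → ℤ) (k : ℕ) (i : Fin n) :
    layer z k i = -1 ∨ layer z k i = 0 ∨ layer z k i = 1 := by
  unfold layer
  split_ifs
  · have := Int.sign_trichotomy (z i)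
    tauto
  · exact .inr (.inl rfl)

theorem sum_layer_apply (z : Fin n → ℤ) (S : Finset ℕ) (i : Fin n) :
    (∑ k ∈ S, layer z k) i = (z i).sign * Nat.count (· ∈ S) (z i).natAbs := by
  simp only [Finset.sum_apply, layer]
  have hfilter : {k ∈ S | k < (z i).natAbs} = {k ∈ range (z i).natAbs | k ∈ S} := by
    ext k
    simp only [mem_filter, mem_range, and_comm]
  rw [← sum_filter, sum_const, nsmul_eq_mul, mul_comm, Nat.count_eq_card_filter_range, hfilter]

theorem sum_layer_range (z : Fin n → ℤ) : ∑ k ∈ range (normInf z), layer z k = z := by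
  ext i
  have hcount : Nat.count (· ∈ range (normInf z)) (z i).natAbs = (z i).natAbs :=
    Nat.count_iff_forall.2 fun k hk => mem_range.2 (hk.trans_le (natAbs_le_normInf z i))
  rw [sum_layer_apply, hcount, Int.sign_mul_natAbs]

theorem natAbs_sum_layer_apply (z : Fin n → ℤ) (S : Finset ℕ) (i : Fin n) :
    ((∑ k ∈ S, layer z k) i).natAbs = Nat.count (· ∈ S) (z i).natAbs := by
  rw [sum_layer_apply, Int.natAbs_mul, Int.natAbs_natCast]
  rcases eq_or_ne (z i) 0 with hz | hz
  · simp [hz]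
  · rw [Int.natAbs_sign_of_ne_zero hz, one_mul]

theorem sum_natAbs_sum_layer_lt (z : Fin n → ℤ) {S : Finset ℕ} (hS : S ⊂ range (normInf z)) :
    ∑ i, ((∑ k ∈ S, layer z k) i).natAbs < ∑ i, (z i).natAbs := by
  simp only [natAbs_sum_layer_apply]
  obtain ⟨k, hk, hkS⟩ := exists_of_ssubset hS
  obtain ⟨i, -, hki⟩ := Finset.lt_sup_iff.1 (mem_range.1 hk)
  refine sum_lt_sum (fun i _ => Nat.count_le _) ⟨i, mem_univ i, ?_⟩
  exact (Nat.count_le _).lt_of_ne fun hcount => hkS (Nat.count_iff_forall.1 hcount k hki)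

theorem layer_eq_layer_of_card_eq (z : Fin n → ℤ) {k l : ℕ}
    (hcard : #{i | k < (z i).natAbs} = #{i | l < (z i).natAbs}) : layer z k = layer z l := by
  wlog hkl : k ≤ l generalizing k l
  · exact (this hcard.symm (le_of_not_ge hkl)).symm
  have hsub : univ.filter (fun i => l < (z i).natAbs) ⊆ univ.filter fun i => k < (z i).natAbs :=
    monotone_filter_right _ fun i _ hi => hkl.trans_lt hi
  have hiff := filter_inj'.1 (eq_of_subset_of_card_le hsub hcard.le)
  ext i
  simp only [layer, hiff (mem_univ i)]

theorem exists_card_eq_and_layer_eq (z : Fin n → ℤ) {α : ℕ} (hz : n * (α - 1) < normInf z) :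
    ∃ J ⊆ range (normInf z), #J = α ∧ ∀ k ∈ J, ∀ l ∈ J, layer z k = layer z l := by
  have hmaps : ∀ k ∈ range (normInf z), #{i | k < (z i).natAbs} ∈ Icc 1 n := fun k hk => by
    obtain ⟨i, -, hki⟩ := Finset.lt_sup_iff.1 (mem_range.1 hk)
    exact mem_Icc.2 ⟨card_pos.2 ⟨i, mem_filter.2 ⟨mem_univ i, hki⟩⟩,
      (card_le_univ _).trans_eq (Fintype.card_fin n)⟩
  obtain ⟨c, -, hc⟩ := exists_lt_card_fiber_of_mul_lt_card_of_maps_to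
    (n := α - 1) hmaps (by simpa using hz)
  obtain ⟨J, hJ, hJα⟩ := exists_subset_card_eq (Nat.le_of_pred_lt hc)
  have hJc (k : ℕ) (hk : k ∈ J) : #{i | k < (z i).natAbs} = c := (mem_filter.1 (hJ hk)).2
  exact ⟨J, hJ.trans (filter_subset _ _), hJα, fun k hk l hl =>
    layer_eq_layer_of_card_eq z ((hJc k hk).trans (hJc l hl).symm)⟩

theorem sum_layer_halve_apply (z : Fin n → ℤ) (D : Finset ℕ) (i : Fin n) :
    (∑ k ∈ halve D, layer z k) i = ((∑ k ∈ D, layer z k) i).tdiv 2 := by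
  rw [sum_layer_apply, sum_layer_apply, count_mem_halve, Int.natCast_ediv]
  rcases Int.sign_trichotomy (z i) with hz | hz | hz
  · simp [hz, Int.tdiv_eq_ediv_of_nonneg]
  · simp [hz]
  · simp [hz, Int.tdiv_eq_ediv_of_nonneg]

theorem dmu_add_sum_layer (x z : Fin n → ℤ) {J K : Finset ℕ} (hJK : J ⊆ K) :
    dmu (x + ∑ k ∈ J, layer z k) (x + ∑ k ∈ K, layer z k) =
      x + ∑ k ∈ J ∪ halve (K \ J), layer z k := by
  rw [sum_union (disjoint_sdiff.mono_right (halve_subset _))]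
  ext i
  rw [dmu_apply, ← Pi.sub_apply, add_sub_add_left_eq_sub, ← sum_sdiff_eq_sub hJK,
    ← sum_layer_halve_apply, ← Pi.add_apply, add_assoc]

theorem dmu_add_sum_layer_swap (x z : Fin n → ℤ) {J K : Finset ℕ} (hJK : J ⊆ K) :
    dmu (x + ∑ k ∈ K, layer z k) (x + ∑ k ∈ J, layer z k) =
      x + ∑ k ∈ K \ halve (K \ J), layer z k := by
  have hsum := dmu_add_dmu (x + ∑ k ∈ J, layer z k) (x + ∑ k ∈ K, layer z k)
  rw [dmu_add_sum_layer x z hJK, sum_union (disjoint_sdiff.mono_right (halve_subset _))] at hsum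
  rw [sum_sdiff_eq_sub ((halve_subset _).trans sdiff_subset)]
  linear_combination hsum

end Layer

section Proximity

variable {n : ℕ} {f : (Fin n → ℤ) → EReal}

theorem DDMConvexFn.supermodular_layer (hf : DDMConvexFn f) (hbot : ∀ x, f x ≠ ⊥)
    (x z : Fin n → ℤ) (A B : Finset ℕ) :
    f (x + ∑ k ∈ A, layer z k) + f (x + ∑ k ∈ B, layer z k) ≤
      f (x + ∑ k ∈ A ∩ B, layer z k) + f (x + ∑ k ∈ A ∪ B, layer z k) := by
  refine supermodular_of_exists_incompRel (h := fun S => f (x + ∑ k ∈ S, layer z k))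
    (fun _ => hbot _) (fun A B hAB => ?_) A B
  have hJK : A ∩ B ⊆ A ∪ B := inter_subset_left.trans subset_union_left
  have hsub := halve_subset ((A ∪ B) \ (A ∩ B))
  refine ⟨A ∩ B ∪ halve ((A ∪ B) \ (A ∩ B)), (A ∪ B) \ halve ((A ∪ B) \ (A ∩ B)),
    incompRel_union_halve (one_lt_card_union_sdiff_inter hAB), ?_, ?_, ?_⟩
  · grind
  · grind
  · have hmid := hf (x + ∑ k ∈ A ∩ B, layer z k) (x + ∑ k ∈ A ∪ B, layer z k)
    rwa [dmu_add_sum_layer x z hJK, dmu_add_sum_layer_swap x z hJK] at hmid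

/-- The point `x` minimizes `f` among the points `x + αd` with `d ∈ {-1, 0, 1}ⁿ`: local optimality
on the scale `α`, the hypothesis of the proximity theorem. -/
def IsScaledLocalMin (f : (Fin n → ℤ) → EReal) (α : ℕ) (x : Fin n → ℤ) : Prop :=
  ∀ d : Fin n → ℤ, (∀ i, d i = -1 ∨ d i = 0 ∨ d i = 1) → f x ≤ f (fun i => x i + (α : ℤ) * d i)

variable {α : ℕ} {x : Fin n → ℤ}

theorem exists_le_and_sum_natAbs_lt (hbot : ∀ x, f x ≠ ⊥) (hf : DDMConvexFn f) (hα : 0 < α)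
    (hx : f x ≠ ⊤) (hloc : IsScaledLocalMin f α x) {z : Fin n → ℤ} (hz : n * (α - 1) < normInf z) :
    ∃ w, f (x + w) ≤ f (x + z) ∧ ∑ i, (w i).natAbs < ∑ i, (z i).natAbs := by
  obtain ⟨J, hJ, hJα, hJlayer⟩ := exists_card_eq_and_layer_eq z hz
  obtain ⟨k, hk⟩ : J.Nonempty := card_pos.1 (hJα ▸ hα)
  have hsumJ : ∑ l ∈ J, layer z l = α • layer z k := by
    rw [sum_congr rfl fun l hl => hJlayer l hl k hk, sum_const, hJα]
  have hstep : f x ≤ f (x + ∑ l ∈ J, layer z l) := by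
    rw [hsumJ]
    refine (hloc (layer z k) (layer_apply_mem z k)).trans_eq (congrArg f ?_)
    ext i
    simp
  have hparallel := hf.supermodular_layer hbot x z J (range (normInf z) \ J)
  rw [inter_sdiff_self, sum_empty, add_zero, union_sdiff_of_subset hJ, sum_layer_range]
    at hparallel
  refine ⟨∑ l ∈ range (normInf z) \ J, layer z l, ?_,
    sum_natAbs_sum_layer_lt z (sdiff_ssubset hJ ⟨k, hk⟩)⟩
  have hadd := (add_le_add_left hstep _).trans hparallel
  lift f x to ℝ using ⟨hx, hbot x⟩ with r
  exact EReal.addLECancellable_coe r hadd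

theorem exists_le_and_normInf_le (hbot : ∀ x, f x ≠ ⊥) (hf : DDMConvexFn f) (hα : 0 < α)
    (hx : f x ≠ ⊤) (hloc : IsScaledLocalMin f α x) (z : Fin n → ℤ) :
    ∃ w, f (x + w) ≤ f (x + z) ∧ normInf w ≤ n * (α - 1) := by
  induction hN : ∑ i, (z i).natAbs using Nat.strong_induction_on generalizing z with
  | _ N ih
  subst hN
  by_cases hz : normInf z ≤ n * (α - 1)
  · exact ⟨z, le_rfl, hz⟩
  obtain ⟨w, hwz, hlt⟩ := exists_le_and_sum_natAbs_lt hbot hf hα hx hloc (not_le.1 hz)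
  obtain ⟨v, hvw, hv⟩ := ih _ hlt w rfl
  exact ⟨v, hvw.trans hwz, hv⟩

end Proximity

/-- Proximity theorem: if `f` is DDM-convex, `α` a positive integer,
`xᵅ ∈ dom f` and `f(xᵅ) ≤ f(xᵅ + αd)` for all `d ∈ {-1,0,+1}ⁿ`, then there is a
global minimizer `x*` of `f` with `‖xᵅ - x*‖_∞ ≤ n(α-1)`. -/
theorem ddmConvex_proximity {n : ℕ} (f : (Fin n → ℤ) → EReal)
    (hbot : ∀ x, f x ≠ ⊥) (hf : DDMConvexFn f)
    (α : ℕ) (hα : 0 < α) (xα : Fin n → ℤ) (hxα : f xα ≠ ⊤)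
    (hloc : ∀ d : Fin n → ℤ, (∀ i, d i = -1 ∨ d i = 0 ∨ d i = 1) →
      f xα ≤ f (fun i => xα i + (α : ℤ) * d i)) :
    ∃ xstar : Fin n → ℤ, (∀ z : Fin n → ℤ, f xstar ≤ f z) ∧
      normInf (xα - xstar) ≤ n * (α - 1) := by
  obtain ⟨w, hw, hmin⟩ := Set.exists_min_image {w : Fin n → ℤ | normInf w ≤ n * (α - 1)}
    (fun w => f (xα + w)) (finite_setOf_normInf_le _) ⟨0, by simp [normInf]⟩
  refine ⟨xα + w, fun z => ?_, ?_⟩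
  · obtain ⟨v, hvz, hv⟩ := exists_le_and_normInf_le hbot hf hα hxα hloc (z - xα)
    rw [add_sub_cancel] at hvz
    exact (hmin v hv).trans hvz
  · rwa [sub_add_cancel_left, normInf_neg]
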